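/- Let (G,C) be a strongly connected inhomogeneous Mauldin–Williams graph in ℝ^d satisfying the SOSC, with the sets X_i having pairwise disjoint interiors, such that ∫₀^∞ e^{−s₀(G)t} N_{e^{−t}}(C_i) dt < ∞ for all i ∈ V, and set K^C = ⋃_{i∈V} K_i^C. If G_M = ℝ, then lim_{t→∞} e^{−s₀(G)t} N_{e^{−t}}(K^C) exists and equals Σ_{i∈V} h_i, where for each i ∈ V, h_i > 0 is the constant with lim_{t→∞} N_{e^{−t}}(K_i^C)/(h_i e^{s₀(G)t}) = 1. -/

import Mathlib

open Set Filter Topology MeasureTheory Metric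

noncomputable section

/-- Points of `ℝ^d`. -/
abbrev Pt (d : ℕ) := EuclideanSpace ℝ (Fin d)

/-- The `r`-covering number of `A ⊆ ℝ^d`: the least number of closed balls of
radius `r` needed to cover `A`. -/
noncomputable def coveringNumber {d : ℕ} (A : Set (Pt d)) (r : ℝ) : ℕ :=
  sInf {k : ℕ | ∃ c : Fin k → Pt d, A ⊆ ⋃ i, Metric.closedBall (c i) r}

/-- A Mauldin–Williams graph in `ℝ^d` over a finite directed multigraph with
vertex type `V` and edge type `E`: each vertex `i` carries a non-empty compact
set `X i` equal to the closure of its interior, and each edge `e` carries a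
contractive similarity `S e` of ratio `r e ∈ (0,1)` mapping `X (term e)` into
`X (init e)`. -/
structure MWGraph (d : ℕ) (V E : Type) [Fintype V] [Fintype E] where
  init : E → V
  term : E → V
  X : V → Set (Pt d)
  S : E → Pt d → Pt d
  r : E → ℝ
  X_nonempty : ∀ i, (X i).Nonempty
  X_compact : ∀ i, IsCompact (X i)
  X_regular : ∀ i, closure (interior (X i)) = X i
  r_pos : ∀ e, 0 < r e
  r_lt_one : ∀ e, r e < 1
  S_maps : ∀ e, Set.MapsTo (S e) (X (term e)) (X (init e))
  S_sim : ∀ e x y, dist (S e x) (S e y) = r e * dist x y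

namespace MWGraph

variable {d : ℕ} {V E : Type} [Fintype V] [Fintype E]

variable (G : MWGraph d V E)

/-- `G.IsPathFrom j γ` holds iff the list of edges `γ` is a directed path
starting at vertex `j`. -/
def IsPathFrom : V → List E → Prop
  | _, [] => True
  | j, e :: es => G.init e = j ∧ IsPathFrom (G.term e) es

/-- Terminal vertex of the path `γ` starting at `j`. -/
def pathTerm : V → List E → V
  | j, [] => j
  | _, e :: es => pathTerm (G.term e) es

/-- `S_γ = S_{e₁} ∘ ⋯ ∘ S_{eₙ}` (with `S_∅ = id`). -/
def pathMap : List E → Pt d → Pt d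
  | [] => id
  | e :: es => G.S e ∘ pathMap es

/-- `r_γ = r_{e₁} ⋯ r_{eₙ}` (with `r_∅ = 1`). -/
def pathRatio (γ : List E) : ℝ := (γ.map G.r).prod

/-- The underlying multigraph is strongly connected: for every ordered pair of
vertices there is a (non-empty) directed path from the first to the second. -/
def StronglyConnected : Prop :=
  ∀ i j : V, ∃ γ : List E, γ ≠ [] ∧ G.IsPathFrom i γ ∧ G.pathTerm i γ = j

/-- `K` is the list of graph-directed self-similar sets of `G`: the unique list
of non-empty compact sets with `K i = ⋃_{e ∈ E_i} S_e (K (term e))`. -/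
def IsAttractor (K : V → Set (Pt d)) : Prop :=
  (∀ i, IsCompact (K i)) ∧ (∀ i, (K i).Nonempty) ∧
    ∀ i, K i = ⋃ e ∈ {e : E | G.init e = i}, G.S e '' K (G.term e)

/-- `C` is an admissible list of condensation sets: compact subsets of the `X i`. -/
def IsCondensation (C : V → Set (Pt d)) : Prop :=
  ∀ i, IsCompact (C i) ∧ C i ⊆ G.X i

/-- `K` is the list of inhomogeneous graph-directed self-similar sets of `(G, C)`:
the unique list of non-empty compact sets with
`K i = ⋃_{e ∈ E_i} S_e (K (term e)) ∪ C i`. -/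
def IsInhomAttractor (C : V → Set (Pt d)) (K : V → Set (Pt d)) : Prop :=
  (∀ i, IsCompact (K i)) ∧ (∀ i, (K i).Nonempty) ∧
    ∀ i, K i = (⋃ e ∈ {e : E | G.init e = i}, G.S e '' K (G.term e)) ∪ C i

/-- `G` satisfies the open set condition with the open sets `U`. -/
def IsOSCWith (U : V → Set (Pt d)) : Prop :=
  (∀ i, (U i).Nonempty) ∧ (∀ i, IsOpen (U i)) ∧ (∀ i, Bornology.IsBounded (U i)) ∧
    (∀ i, U i ⊆ G.X i) ∧
    (∀ i, (⋃ e ∈ {e : E | G.init e = i}, G.S e '' U (G.term e)) ⊆ U i) ∧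
    ∀ e e' : E, G.init e = G.init e' → e ≠ e' →
      Disjoint (G.S e '' U (G.term e)) (G.S e' '' U (G.term e'))

/-- The set `{-log r_γ : γ a directed cycle of G}`. -/
def cycleSet : Set ℝ :=
  {x : ℝ | ∃ (j : V) (γ : List E), γ ≠ [] ∧ G.IsPathFrom j γ ∧ G.pathTerm j γ = j ∧
    x = -Real.log (G.pathRatio γ)}

/-- `G_M`, the smallest closed additive subgroup of `ℝ` containing
`{-log r_γ : γ a directed cycle}`. -/
def GM : Set ℝ := closure ((AddSubgroup.closure (G.cycleSet) : AddSubgroup ℝ) : Set ℝ)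

variable [DecidableEq V]

/-- The matrix `A_G^s` with entries `(A_G^s)_{ij} = Σ_{e ∈ E_{ij}} r_e^s`. -/
def Amatrix (s : ℝ) : Matrix V V ℝ :=
  Matrix.of fun i j => ∑ e : E, if G.init e = i ∧ G.term e = j then G.r e ^ s else 0

end MWGraph

/-- Spectral radius of a real square matrix: the largest modulus of a complex
eigenvalue. -/
noncomputable def matrixSpectralRadius {n : Type} [Fintype n] [DecidableEq n]
    (A : Matrix n n ℝ) : ℝ :=
  sSup {x : ℝ | ∃ μ : ℂ, μ ∈ spectrum ℂ (A.map (fun a : ℝ => (a : ℂ))) ∧ x = ‖μ‖}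

/-- `s` is the (unique) exponent `s ≥ 0` with `ρ(A_G^s) = 1`, i.e. `s = s₀(G)`. -/
def IsS0 {d : ℕ} {V E : Type} [Fintype V] [Fintype E] [DecidableEq V]
    (G : MWGraph d V E) (s : ℝ) : Prop :=
  0 ≤ s ∧ matrixSpectralRadius (G.Amatrix s) = 1

section CoveringNumber

variable {d : ℕ} {A B : Set (Pt d)} {r : ℝ}

lemma coveringNumber_le_card (s : Finset (Pt d)) (h : A ⊆ ⋃ x ∈ s, closedBall x r) :
    coveringNumber A r ≤ s.card := by
  refine Nat.sInf_le ⟨fun k => (s.equivFin.symm k : Pt d), fun a ha => ?_⟩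
  obtain ⟨x, hx, hax⟩ := mem_iUnion₂.1 (h ha)
  exact mem_iUnion.2 ⟨s.equivFin ⟨x, hx⟩, by simpa using hax⟩

lemma exists_cover_card_le (hA : Bornology.IsBounded A) (hr : 0 < r) :
    ∃ s : Finset (Pt d), s.card ≤ coveringNumber A r ∧ A ⊆ ⋃ x ∈ s, closedBall x r := by
  classical
  have hne : {k : ℕ | ∃ c : Fin k → Pt d, A ⊆ ⋃ i, closedBall (c i) r}.Nonempty := by
    obtain ⟨t, ht, hcov⟩ :=
      Metric.totallyBounded_iff.1
        (hA.isCompact_closure.totallyBounded.subset subset_closure) r hr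
    refine ⟨ht.toFinset.card, fun k => (ht.toFinset.equivFin.symm k : Pt d), fun a ha => ?_⟩
    obtain ⟨x, hx, hax⟩ := mem_iUnion₂.1 (hcov ha)
    exact mem_iUnion.2 ⟨ht.toFinset.equivFin ⟨x, ht.mem_toFinset.2 hx⟩,
      by simpa using (mem_ball.1 hax).le⟩
  obtain ⟨c, hc⟩ := Nat.sInf_mem hne
  refine ⟨Finset.univ.image c, Finset.card_image_le.trans (Finset.card_fin _).le, ?_⟩
  intro a ha
  obtain ⟨i, hi⟩ := mem_iUnion.1 (hc ha)
  exact mem_iUnion₂.2 ⟨c i, Finset.mem_image_of_mem _ (Finset.mem_univ _), hi⟩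

lemma coveringNumber_empty : coveringNumber (∅ : Set (Pt d)) r = 0 :=
  Nat.le_zero.1 (coveringNumber_le_card (∅ : Finset (Pt d)) (empty_subset _))

lemma coveringNumber_mono (hB : Bornology.IsBounded B) (hr : 0 < r) (h : A ⊆ B) :
    coveringNumber A r ≤ coveringNumber B r := by
  obtain ⟨s, hs, hcov⟩ := exists_cover_card_le hB hr
  exact (coveringNumber_le_card s (h.trans hcov)).trans hs

lemma coveringNumber_anti (hA : Bornology.IsBounded A) (hr : 0 < r) {r' : ℝ} (h : r ≤ r') :
    coveringNumber A r' ≤ coveringNumber A r := by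
  obtain ⟨s, hs, hcov⟩ := exists_cover_card_le hA hr
  exact (coveringNumber_le_card s
    (hcov.trans (iUnion₂_mono fun x _ => closedBall_subset_closedBall h))).trans hs

lemma coveringNumber_union_le (hA : Bornology.IsBounded A) (hB : Bornology.IsBounded B)
    (hr : 0 < r) : coveringNumber (A ∪ B) r ≤ coveringNumber A r + coveringNumber B r := by
  classical
  obtain ⟨s, hs, hsc⟩ := exists_cover_card_le hA hr
  obtain ⟨t, ht, htc⟩ := exists_cover_card_le hB hr
  refine (coveringNumber_le_card (s ∪ t) ?_).trans
    ((Finset.card_union_le s t).trans (add_le_add hs ht))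
  rw [Finset.set_biUnion_union]
  exact union_subset_union hsc htc

lemma coveringNumber_iUnion_le {ι : Type*} [Fintype ι] {F : ι → Set (Pt d)}
    (hF : ∀ i, Bornology.IsBounded (F i)) (hr : 0 < r) :
    coveringNumber (⋃ i, F i) r ≤ ∑ i, coveringNumber (F i) r := by
  classical
  choose s hs hsc using fun i => exists_cover_card_le (hF i) hr
  refine (coveringNumber_le_card (Finset.univ.biUnion s) ?_).trans
    (Finset.card_biUnion_le.trans (Finset.sum_le_sum fun i _ => hs i))
  refine iUnion_subset fun i a ha => ?_
  obtain ⟨x, hx, hax⟩ := mem_iUnion₂.1 (hsc i ha)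
  exact mem_iUnion₂.2 ⟨x, Finset.mem_biUnion.2 ⟨i, Finset.mem_univ _, hx⟩, hax⟩

lemma coveringNumber_image_le {S : Pt d → Pt d} {ρ : ℝ}
    (hS : ∀ x y, dist (S x) (S y) = ρ * dist x y) (hρ : 0 < ρ)
    (hA : Bornology.IsBounded A) (hr : 0 < r) :
    coveringNumber (S '' A) (ρ * r) ≤ coveringNumber A r := by
  classical
  obtain ⟨s, hs, hsc⟩ := exists_cover_card_le hA hr
  refine (coveringNumber_le_card (s.image S) ?_).trans (Finset.card_image_le.trans hs)
  rintro _ ⟨a, ha, rfl⟩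
  obtain ⟨x, hx, hax⟩ := mem_iUnion₂.1 (hsc ha)
  refine mem_iUnion₂.2 ⟨S x, Finset.mem_image_of_mem _ hx, ?_⟩
  rw [mem_closedBall, hS]
  exact mul_le_mul_of_nonneg_left hax hρ.le

/-- At small scales, the covering numbers of finitely many disjoint compact sets add up. -/
lemma eventually_sum_coveringNumber_le {ι : Type*} [Fintype ι] {F : ι → Set (Pt d)}
    (hF : ∀ i, IsCompact (F i)) (hdisj : Pairwise fun i j => Disjoint (F i) (F j)) :
    ∀ᶠ r in 𝓝[>] (0 : ℝ), ∑ i, coveringNumber (F i) r ≤ coveringNumber (⋃ i, F i) r := by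
  classical
  have hsep : ∀ i j, i ≠ j → ∀ᶠ r in 𝓝[>] (0 : ℝ),
      ∀ x, (closedBall x r ∩ F i).Nonempty → ¬ (closedBall x r ∩ F j).Nonempty := by
    intro i j hij
    obtain ⟨δ, hδ, hd⟩ := (hdisj hij).exists_thickenings (hF i) (hF j).isClosed
    filter_upwards [Ioo_mem_nhdsGT hδ] with r hr x hi hj
    have key : ∀ k, (closedBall x r ∩ F k).Nonempty → x ∈ thickening δ (F k) := by
      rintro k ⟨y, hy, hyk⟩
      exact mem_thickening_iff.2 ⟨y, hyk, by
        rw [dist_comm]; exact (mem_closedBall.1 hy).trans_lt hr.2⟩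
    exact disjoint_left.1 hd (key i hi) (key j hj)
  have hsep' := eventually_all.2 fun i => eventually_all.2 fun j =>
    eventually_imp_distrib_left.2 (hsep i j)
  filter_upwards [hsep', self_mem_nhdsWithin] with r hr hr0
  obtain ⟨s, hs, hsc⟩ := exists_cover_card_le
    (isCompact_iUnion hF).isBounded (show 0 < r from hr0)
  refine le_trans ?_ hs
  let T : ι → Finset (Pt d) := fun i => s.filter fun x => (closedBall x r ∩ F i).Nonempty
  calc ∑ i, coveringNumber (F i) r ≤ ∑ i, (T i).card := by
        refine Finset.sum_le_sum fun i _ => coveringNumber_le_card _ fun a ha => ?_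
        obtain ⟨x, hx, hax⟩ := mem_iUnion₂.1 (hsc (mem_iUnion.2 ⟨i, ha⟩))
        exact mem_iUnion₂.2 ⟨x, Finset.mem_filter.2 ⟨hx, a, hax, ha⟩, hax⟩
    _ = (Finset.univ.biUnion T).card := by
        refine (Finset.card_biUnion fun i _ j _ hij => ?_).symm
        refine Finset.disjoint_left.2 fun x hi hj => ?_
        exact hr i j hij x (Finset.mem_filter.1 hi).2 (Finset.mem_filter.1 hj).2
    _ ≤ s.card := Finset.card_le_card (Finset.biUnion_subset.2 fun i _ => Finset.filter_subset _ _)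

/-- If `t ↦ e^{-st} N_{e^{-t}}(A)` is integrable on `(0, ∞)`, then it tends to zero. -/
lemma eventually_coveringNumber_le_of_lintegral_lt_top (hA : Bornology.IsBounded A) {s : ℝ}
    (hs : 0 ≤ s)
    (hint : ∫⁻ t in Set.Ioi (0 : ℝ),
      ENNReal.ofReal (Real.exp (-s * t) * (coveringNumber A (Real.exp (-t)) : ℝ)) < ⊤)
    {c : ℝ} (hc : 0 < c) :
    ∀ᶠ t in atTop, Real.exp (-s * t) * (coveringNumber A (Real.exp (-t)) : ℝ) ≤ c := by
  set f : ℝ → ℝ := fun t => Real.exp (-s * t) * (coveringNumber A (Real.exp (-t)) : ℝ) with hf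
  set ν := (volume.restrict (Ioi (0 : ℝ))).withDensity fun t => ENNReal.ofReal (f t) with hν
  have hfin : IsFiniteMeasure ν := isFiniteMeasure_withDensity hint.ne
  have hlim : Tendsto (fun t : ℝ => ν (Ici t)) atTop (𝓝 0) := by
    have := tendsto_measure_iInter_atTop (μ := ν) (s := fun t : ℝ => Ici t)
      (fun t => measurableSet_Ici.nullMeasurableSet) (fun a b h => Ici_subset_Ici.2 h)
      ⟨0, measure_ne_top _ _⟩
    have he : (⋂ t : ℝ, Ici t) = ∅ := by
      refine eq_empty_iff_forall_notMem.2 fun x hx => ?_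
      have := mem_iInter.1 hx (x + 1)
      simp only [mem_Ici] at this
      linarith
    simpa [he, Function.comp_def] using this
  have hpos : 0 < ENNReal.ofReal (Real.exp (-s) * c) :=
    ENNReal.ofReal_pos.2 (by positivity)
  filter_upwards [hlim.eventually_lt_const hpos, eventually_gt_atTop 0] with t ht ht0
  by_contra! hlt
  refine absurd ht (not_lt.2 ?_)
  have hsub : Icc t (t + 1) ⊆ Ioi 0 := fun u hu => ht0.trans_le hu.1
  calc ENNReal.ofReal (Real.exp (-s) * c)
      = ∫⁻ _ in Icc t (t + 1), ENNReal.ofReal (Real.exp (-s) * c) := by simp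
    _ ≤ ∫⁻ u in Icc t (t + 1), ENNReal.ofReal (f u) := by
        refine setLIntegral_mono' measurableSet_Icc fun u hu => ENNReal.ofReal_le_ofReal ?_
        have hN : (coveringNumber A (Real.exp (-t)) : ℝ) ≤ coveringNumber A (Real.exp (-u)) := by
          exact_mod_cast coveringNumber_anti hA (Real.exp_pos _)
            (Real.exp_le_exp.2 (neg_le_neg hu.1))
        calc Real.exp (-s) * c
            ≤ Real.exp (-s) * (Real.exp (-s * t) * (coveringNumber A (Real.exp (-t)) : ℝ)) :=
              mul_le_mul_of_nonneg_left hlt.le (Real.exp_pos _).le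
          _ = Real.exp (-s + -s * t) * (coveringNumber A (Real.exp (-t)) : ℝ) := by
              rw [Real.exp_add]; ring
          _ ≤ f u := by
              refine mul_le_mul (Real.exp_le_exp.2 ?_) hN (Nat.cast_nonneg _) (Real.exp_pos _).le
              nlinarith [hu.2]
    _ = ν (Icc t (t + 1)) := by
        rw [hν, withDensity_apply _ measurableSet_Icc,
          Measure.restrict_restrict measurableSet_Icc, inter_eq_left.2 hsub]
    _ ≤ ν (Ici t) := measure_mono Icc_subset_Ici_self

end CoveringNumber

section PerronFrobenius

variable {n : Type} [Fintype n] [DecidableEq n] {A : Matrix n n ℝ}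

attribute [local instance] Matrix.linftyOpNormedRing Matrix.linftyOpNormedAlgebra

lemma norm_le_matrixSpectralRadius {μ : ℂ}
    (hμ : μ ∈ spectrum ℂ (A.map (fun a : ℝ => (a : ℂ)))) : ‖μ‖ ≤ matrixSpectralRadius A := by
  refine le_csSup ⟨‖A.map (fun a : ℝ => (a : ℂ))‖ * ‖(1 : Matrix n n ℂ)‖, ?_⟩ ⟨μ, hμ, rfl⟩
  rintro _ ⟨ν, hν, rfl⟩
  exact spectrum.norm_le_norm_mul_of_mem hν

lemma pow_apply_nonneg (hA : ∀ i j, 0 ≤ A i j) (k : ℕ) (i j : n) : 0 ≤ (A ^ k) i j := by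
  induction k generalizing i j with
  | zero => rw [pow_zero, Matrix.one_apply]; positivity
  | succ k ih =>
    rw [pow_succ, Matrix.mul_apply]
    exact Finset.sum_nonneg fun l _ => mul_nonneg (ih i l) (hA l j)

lemma pow_mulVec_ge (hA : ∀ i j, 0 ≤ A i j) {z : n → ℝ} {c : ℝ} (hc : 0 ≤ c)
    (h : c • z ≤ A.mulVec z) (k : ℕ) : c ^ k • z ≤ (A ^ k).mulVec z := by
  induction k with
  | zero => simp
  | succ k ih =>
    have hmono : A.mulVec (c ^ k • z) ≤ A.mulVec ((A ^ k).mulVec z) := fun i =>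
      Finset.sum_le_sum fun j _ => mul_le_mul_of_nonneg_left (ih j) (hA i j)
    calc c ^ (k + 1) • z = c ^ k • (c • z) := by rw [smul_smul, pow_succ]
      _ ≤ c ^ k • A.mulVec z := smul_le_smul_of_nonneg_left h (pow_nonneg hc k)
      _ = A.mulVec (c ^ k • z) := (Matrix.mulVec_smul _ _ _).symm
      _ ≤ _ := hmono
      _ = (A ^ (k + 1)).mulVec z := by rw [Matrix.mulVec_mulVec, pow_succ']

/-- Collatz–Wielandt lower bound for the spectral radius of a non-negative matrix. -/
lemma le_matrixSpectralRadius (hA : ∀ i j, 0 ≤ A i j) {z : n → ℝ}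
    (hz : 0 ≤ z) (hz0 : z ≠ 0) {c : ℝ} (hc : 0 ≤ c) (h : c • z ≤ A.mulVec z) :
    c ≤ matrixSpectralRadius A := by
  have hpow : ∀ k : ℕ, c ^ k ≤ ‖(A.map (fun a : ℝ => (a : ℂ))) ^ k‖ := by
    intro k
    have hmap : (A.map (fun a : ℝ => (a : ℂ))) ^ k = (A ^ k).map (fun a : ℝ => (a : ℂ)) :=
      (map_pow (Complex.ofRealHom.mapMatrix) A k).symm
    have hnorm : ‖(A ^ k).map (fun a : ℝ => (a : ℂ))‖ = ‖A ^ k‖ := by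
      simp [Matrix.linfty_opNorm_def]
    rw [hmap, hnorm]
    have hle : c ^ k * ‖z‖ ≤ ‖A ^ k‖ * ‖z‖ := by
      refine le_trans ?_ (Matrix.linfty_opNorm_mulVec _ _)
      rw [← Real.norm_of_nonneg (pow_nonneg hc k), ← norm_smul]
      refine (pi_norm_le_iff_of_nonneg (norm_nonneg _)).2 fun i => ?_
      have hi : 0 ≤ (c ^ k • z) i := mul_nonneg (pow_nonneg hc k) (hz i)
      rw [Real.norm_of_nonneg hi]
      exact (pow_mulVec_ge hA hc h k i).trans
        ((le_abs_self _).trans (norm_le_pi_norm ((A ^ k).mulVec z) i))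
    exact le_of_mul_le_mul_right hle (norm_pos_iff.2 hz0)
  have : Nonempty n := by
    by_contra hn
    rw [not_nonempty_iff] at hn
    exact hz0 (Subsingleton.elim _ _)
  obtain ⟨μ, hμ, hμr⟩ := spectrum.exists_nnnorm_eq_spectralRadius
    (A.map (fun a : ℝ => (a : ℂ)))
  refine le_trans ?_ (norm_le_matrixSpectralRadius hμ)
  have hlim := spectrum.pow_nnnorm_pow_one_div_tendsto_nhds_spectralRadius
    (A.map (fun a : ℝ => (a : ℂ)))
  rw [← hμr] at hlim
  have hge : (Real.toNNReal c : ENNReal) ≤ ‖μ‖₊ := by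
    refine ge_of_tendsto hlim ?_
    filter_upwards [eventually_gt_atTop 0] with k hk
    have hk' : (0 : ℝ) < k := Nat.cast_pos.2 hk
    rw [one_div, ENNReal.le_rpow_inv_iff hk', ENNReal.rpow_natCast]
    norm_cast
    rw [← NNReal.coe_le_coe]
    simpa [Real.coe_toNNReal c hc] using hpow k
  have := NNReal.coe_le_coe.2 (ENNReal.coe_le_coe.1 hge)
  simpa [Real.coe_toNNReal c hc] using this

/-- A non-negative subinvariant vector of an irreducible matrix of spectral radius one is
invariant. -/
lemma mulVec_eq_of_le_mulVec (hA : ∀ i j, 0 ≤ A i j) (hirr : ∀ i j, ∃ k : ℕ, 0 < (A ^ k) i j)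
    (hρ : matrixSpectralRadius A = 1) {x : n → ℝ} (hx : 0 ≤ x) (h : x ≤ A.mulVec x) :
    A.mulVec x = x := by
  have hApow := pow_apply_nonneg hA
  have hAv : ∀ (k : ℕ) (v : n → ℝ), 0 ≤ v → 0 ≤ (A ^ k).mulVec v := fun k v hv i =>
    Finset.sum_nonneg fun j _ => mul_nonneg (hApow k i j) (hv j)
  by_contra hne
  set y := A.mulVec x - x with hy
  have hy0 : 0 ≤ y := sub_nonneg.2 h
  obtain ⟨j, hj⟩ : ∃ j, 0 < y j := by
    by_contra! hcon
    exact hne (sub_eq_zero.1 (le_antisymm hcon hy0))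
  choose k hk using fun i => hirr i j
  let N := Finset.univ.sup k + 1
  set z := ∑ m ∈ Finset.range N, (A ^ m).mulVec x with hzdef
  have hz : 0 ≤ z := Finset.sum_nonneg fun m _ => hAv m x hx
  have hdiff : A.mulVec z - z = ∑ m ∈ Finset.range N, (A ^ m).mulVec y := by
    rw [hzdef, Matrix.mulVec_sum, ← Finset.sum_sub_distrib]
    refine Finset.sum_congr rfl fun m _ => ?_
    rw [hy, Matrix.mulVec_sub, Matrix.mulVec_mulVec, Matrix.mulVec_mulVec, ← pow_succ', pow_succ]
  have hpos : ∀ i, 0 < (A.mulVec z - z) i := by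
    intro i
    rw [hdiff, Finset.sum_apply]
    refine Finset.sum_pos' (fun m _ => hAv m y hy0 i) ⟨k i, ?_, ?_⟩
    · exact Finset.mem_range.2 (Nat.lt_succ_of_le (Finset.le_sup (Finset.mem_univ i)))
    · exact Finset.sum_pos' (fun l _ => mul_nonneg (hApow _ i l) (hy0 l))
        ⟨j, Finset.mem_univ j, mul_pos (hk i) hj⟩
  have hz0 : z ≠ 0 := by
    rintro h0
    have := hpos j
    simp [h0] at this
  have hev : ∀ᶠ ε in 𝓝[>] (0 : ℝ), ∀ i, ε * z i < (A.mulVec z - z) i := by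
    refine eventually_all.2 fun i => ?_
    have ht : Tendsto (fun ε : ℝ => ε * z i) (𝓝[>] 0) (𝓝 0) := by
      have : Tendsto (fun ε : ℝ => ε * z i) (𝓝 0) (𝓝 (0 * z i)) :=
        tendsto_id.mul_const _
      rw [zero_mul] at this
      exact this.mono_left nhdsWithin_le_nhds
    exact ht.eventually_lt_const (hpos i)
  obtain ⟨ε, hε, hε0⟩ := (hev.and self_mem_nhdsWithin).exists
  have hε0 : 0 < ε := hε0
  have hbound := le_matrixSpectralRadius hA hz hz0 (c := 1 + ε) (by positivity) fun i => by
    have := hε i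
    simp only [Pi.sub_apply, Pi.smul_apply, smul_eq_mul] at this ⊢
    linarith
  rw [hρ] at hbound
  linarith

end PerronFrobenius

section UpperDensity

variable {d : ℕ} {s a b : ℝ} {A B W : Set (Pt d)}

/-- `A` is bounded and `e^{-st} N_{e^{-t}}(A) ≤ c` for all large `t`. -/
def UpperDensityLE (s : ℝ) (A : Set (Pt d)) (c : ℝ) : Prop :=
  Bornology.IsBounded A ∧
    ∀ᶠ t in atTop, Real.exp (-s * t) * (coveringNumber A (Real.exp (-t)) : ℝ) ≤ c

lemma UpperDensityLE.nonneg (h : UpperDensityLE s A a) : 0 ≤ a := by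
  obtain ⟨t, ht⟩ := h.2.exists
  exact le_trans (by positivity) ht

lemma UpperDensityLE.mono (h : UpperDensityLE s A a) (hab : a ≤ b) : UpperDensityLE s A b :=
  ⟨h.1, h.2.mono fun _ ht => ht.trans hab⟩

lemma upperDensityLE_empty : UpperDensityLE s (∅ : Set (Pt d)) 0 :=
  ⟨Bornology.isBounded_empty, Eventually.of_forall fun t => by simp [coveringNumber_empty]⟩

lemma UpperDensityLE.union (hA : UpperDensityLE s A a) (hB : UpperDensityLE s B b) :
    UpperDensityLE s (A ∪ B) (a + b) := by
  refine ⟨hA.1.union hB.1, ?_⟩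
  filter_upwards [hA.2, hB.2] with t ha hb
  have hN : (coveringNumber (A ∪ B) (Real.exp (-t)) : ℝ) ≤
      coveringNumber A (Real.exp (-t)) + coveringNumber B (Real.exp (-t)) := by
    exact_mod_cast coveringNumber_union_le hA.1 hB.1 (Real.exp_pos _)
  nlinarith [Real.exp_pos (-s * t)]

lemma UpperDensityLE.image {S : Pt d → Pt d} {ρ : ℝ}
    (hS : ∀ x y, dist (S x) (S y) = ρ * dist x y) (hρ : 0 < ρ) (hA : UpperDensityLE s A a) :
    UpperDensityLE s (S '' A) (ρ ^ s * a) := by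
  have hlip : LipschitzWith (Real.toNNReal ρ) S :=
    LipschitzWith.of_dist_le_mul fun x y => by rw [hS, Real.coe_toNNReal ρ hρ.le]
  refine ⟨hlip.isBounded_image hA.1, ?_⟩
  have hshift : Tendsto (fun t : ℝ => t + Real.log ρ) atTop atTop :=
    tendsto_atTop_add_const_right _ _ tendsto_id
  filter_upwards [hshift.eventually hA.2] with t ht
  have hscale : ρ * Real.exp (-(t + Real.log ρ)) = Real.exp (-t) := by
    rw [neg_add, Real.exp_add, Real.exp_neg (Real.log ρ), Real.exp_log hρ]
    field_simp
  have hN := coveringNumber_image_le hS hρ hA.1 (Real.exp_pos (-(t + Real.log ρ)))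
  rw [hscale] at hN
  have hN' : (coveringNumber (S '' A) (Real.exp (-t)) : ℝ) ≤
      coveringNumber A (Real.exp (-(t + Real.log ρ))) := by exact_mod_cast hN
  have hexp : Real.exp (-s * t) = ρ ^ s * Real.exp (-s * (t + Real.log ρ)) := by
    rw [Real.rpow_def_of_pos hρ, ← Real.exp_add]
    congr 1
    ring
  rw [hexp, mul_assoc]
  exact mul_le_mul_of_nonneg_left
    ((mul_le_mul_of_nonneg_left hN' (Real.exp_pos _).le).trans ht) (by positivity)

/-- For every `c' > c`, all of `B` apart from a compact subset of `W` has upper density at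
most `c'`. -/
def BoundaryDensityLE (s : ℝ) (W B : Set (Pt d)) (c : ℝ) : Prop :=
  ∀ c' > c, ∃ F R : Set (Pt d), IsCompact F ∧ F ⊆ W ∧ B ⊆ F ∪ R ∧ UpperDensityLE s R c'

lemma boundaryDensityLE_of_upperDensityLE (h : ∀ c > a, UpperDensityLE s B c) :
    BoundaryDensityLE s W B a := fun c hc =>
  ⟨∅, B, isCompact_empty, empty_subset _, subset_union_right, h c hc⟩

lemma boundaryDensityLE_of_subset (hB : IsCompact B) (h : B ⊆ W) :
    BoundaryDensityLE s W B 0 := fun _ hc =>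
  ⟨B, ∅, hB, h, subset_union_left, upperDensityLE_empty.mono hc.le⟩

lemma BoundaryDensityLE.mono (h : BoundaryDensityLE s W B a) (hAB : A ⊆ B) :
    BoundaryDensityLE s W A a := fun c hc =>
  let ⟨F, R, hF, hFW, hB, hR⟩ := h c hc
  ⟨F, R, hF, hFW, hAB.trans hB, hR⟩

lemma BoundaryDensityLE.union (hA : BoundaryDensityLE s W A a) (hB : BoundaryDensityLE s W B b) :
    BoundaryDensityLE s W (A ∪ B) (a + b) := by
  intro c hc
  obtain ⟨F, R, hF, hFW, hAF, hR⟩ := hA (a + (c - a - b) / 2) (by linarith)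
  obtain ⟨F', R', hF', hFW', hBF, hR'⟩ := hB (b + (c - a - b) / 2) (by linarith)
  refine ⟨F ∪ F', R ∪ R', hF.union hF', union_subset hFW hFW', ?_,
    (hR.union hR').mono (by linarith)⟩
  rw [union_union_union_comm]
  exact union_subset_union hAF hBF

lemma BoundaryDensityLE.biUnion {ι : Type*} {T : Finset ι} {B : ι → Set (Pt d)} {c : ι → ℝ}
    (h : ∀ e ∈ T, BoundaryDensityLE s W (B e) (c e)) :
    BoundaryDensityLE s W (⋃ e ∈ T, B e) (∑ e ∈ T, c e) := by
  classical
  induction T using Finset.induction_on with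
  | empty => simpa using boundaryDensityLE_of_subset isCompact_empty (empty_subset W)
  | insert e T he ih =>
    rw [Finset.set_biUnion_insert, Finset.sum_insert he]
    exact (h e (Finset.mem_insert_self e T)).union
      (ih fun e' he' => h e' (Finset.mem_insert_of_mem he'))

lemma BoundaryDensityLE.image {W' : Set (Pt d)} {S : Pt d → Pt d} {ρ : ℝ}
    (hS : ∀ x y, dist (S x) (S y) = ρ * dist x y) (hρ : 0 < ρ) (hW : S '' W ⊆ W')
    (hB : BoundaryDensityLE s W B a) : BoundaryDensityLE s W' (S '' B) (ρ ^ s * a) := by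
  intro c hc
  have hρs : 0 < ρ ^ s := Real.rpow_pos_of_pos hρ s
  obtain ⟨F, R, hF, hFW, hBF, hR⟩ := hB (c / ρ ^ s) ((lt_div_iff₀' hρs).2 hc)
  have hlip : LipschitzWith (Real.toNNReal ρ) S :=
    LipschitzWith.of_dist_le_mul fun x y => by rw [hS, Real.coe_toNNReal ρ hρ.le]
  refine ⟨S '' F, S '' R, hF.image hlip.continuous, (image_mono hFW).trans hW, ?_, ?_⟩
  · rw [← image_union]
    exact image_mono hBF
  · exact (hR.image hS hρ).mono (mul_div_cancel₀ c hρs.ne').le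

end UpperDensity

lemma BoundaryDensityLE.nonneg {d : ℕ} {s c : ℝ} {W B : Set (Pt d)}
    (h : BoundaryDensityLE s W B c) : 0 ≤ c :=
  le_of_forall_gt_imp_ge_of_dense fun c' hc' =>
    let ⟨_, _, _, _, _, hR⟩ := h c' hc'
    hR.nonneg

/-- The set of admissible boundary densities has a least element. -/
lemma BoundaryDensityLE.exists_isLeast {d : ℕ} {s c : ℝ} {W B : Set (Pt d)}
    (h : BoundaryDensityLE s W B c) : ∃ D, IsLeast {c | BoundaryDensityLE s W B c} D := by
  have hbdd : BddBelow {c | BoundaryDensityLE s W B c} := ⟨0, fun _ hc => hc.nonneg⟩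
  refine ⟨sInf {c | BoundaryDensityLE s W B c}, fun c' hc' => ?_, fun c' hc' => csInf_le hbdd hc'⟩
  obtain ⟨c'', hc'', hlt⟩ := exists_lt_of_csInf_lt ⟨c, h⟩ hc'
  exact hc'' c' hlt

namespace MWGraph

section Paths

variable {d : ℕ} {V E : Type} [Fintype V] [Fintype E] (G : MWGraph d V E)

lemma pathRatio_cons (e : E) (γ : List E) : G.pathRatio (e :: γ) = G.r e * G.pathRatio γ := by
  simp [pathRatio]

lemma pathRatio_pos (γ : List E) : 0 < G.pathRatio γ := by
  induction γ with
  | nil => simp [pathRatio]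
  | cons e γ ih => rw [pathRatio_cons]; exact mul_pos (G.r_pos e) ih

lemma pathRatio_le_pow {q : ℝ} (hq : ∀ e, G.r e ≤ q) (γ : List E) :
    G.pathRatio γ ≤ q ^ γ.length := by
  induction γ with
  | nil => simp [pathRatio]
  | cons e γ ih =>
    rw [pathRatio_cons, List.length_cons, pow_succ']
    exact mul_le_mul (hq e) ih (G.pathRatio_pos γ).le ((G.r_pos e).le.trans (hq e))

lemma exists_r_le : ∃ q : ℝ, 0 ≤ q ∧ q < 1 ∧ ∀ e, G.r e ≤ q := by
  rcases isEmpty_or_nonempty E with hE | hE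
  · exact ⟨0, le_rfl, one_pos, fun e => isEmptyElim e⟩
  · obtain ⟨e, he⟩ := Finite.exists_max G.r
    exact ⟨G.r e, (G.r_pos e).le, G.r_lt_one e, he⟩

lemma dist_pathMap (γ : List E) (x y : Pt d) :
    dist (G.pathMap γ x) (G.pathMap γ y) = G.pathRatio γ * dist x y := by
  induction γ with
  | nil => simp [pathMap, pathRatio]
  | cons e γ ih =>
    rw [pathRatio_cons, mul_assoc, ← ih]
    exact G.S_sim e _ _

lemma continuous_pathMap (γ : List E) : Continuous (G.pathMap γ) :=
  (LipschitzWith.of_dist_le_mul (K := Real.toNNReal (G.pathRatio γ)) fun x y => by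
    rw [dist_pathMap, Real.coe_toNNReal _ (G.pathRatio_pos γ).le]).continuous

lemma IsAttractor.exists_path {G : MWGraph d V E} {K : V → Set (Pt d)} (hK : G.IsAttractor K)
    (n : ℕ) {i : V} {x : Pt d} (hx : x ∈ K i) :
    ∃ γ : List E, γ.length = n ∧ G.IsPathFrom i γ ∧ x ∈ G.pathMap γ '' K (G.pathTerm i γ) := by
  induction n generalizing i x with
  | zero => exact ⟨[], rfl, trivial, x, hx, rfl⟩
  | succ n ih =>
    rw [hK.2.2 i] at hx
    obtain ⟨e, he, y, hy, rfl⟩ := mem_iUnion₂.1 hx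
    obtain ⟨γ, hlen, hpath, z, hz, rfl⟩ := ih hy
    exact ⟨e :: γ, by simp [hlen], ⟨he, hpath⟩, z, hz, rfl⟩

/-- Some cylinder of any given compact sets starting at `i` lies inside the open set `W`, provided
that `W` meets the attractor. -/
lemma IsAttractor.exists_path_image_subset {G : MWGraph d V E} {K : V → Set (Pt d)}
    (hK : G.IsAttractor K) {L : V → Set (Pt d)} (hL : ∀ i, IsCompact (L i))
    {W : Set (Pt d)} (hW : IsOpen W) {i : V} (hWK : (W ∩ K i).Nonempty) :
    ∃ γ : List E, G.IsPathFrom i γ ∧ G.pathMap γ '' L (G.pathTerm i γ) ⊆ W := by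
  obtain ⟨x, hxW, hxK⟩ := hWK
  obtain ⟨ε, hε, hball⟩ := Metric.isOpen_iff.1 hW x hxW
  obtain ⟨q, hq0, hq1, hq⟩ := G.exists_r_le
  have hbdd : Bornology.IsBounded ((⋃ j, K j) ∪ ⋃ j, L j) :=
    ((isCompact_iUnion hK.1).union (isCompact_iUnion hL)).isBounded
  obtain ⟨M, hM⟩ := Metric.isBounded_iff.1 hbdd
  have hM0 : 0 ≤ M := by
    have hx' : x ∈ (⋃ j, K j) ∪ ⋃ j, L j := Or.inl (mem_iUnion.2 ⟨i, hxK⟩)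
    simpa using hM hx' hx'
  have hlim : Tendsto (fun n : ℕ => q ^ n * M) atTop (𝓝 0) := by
    simpa using (tendsto_pow_atTop_nhds_zero_of_lt_one hq0 hq1).mul_const M
  obtain ⟨n, hn⟩ := (hlim.eventually_lt_const hε).exists
  obtain ⟨γ, hlen, hpath, z, hz, rfl⟩ := hK.exists_path n hxK
  refine ⟨γ, hpath, ?_⟩
  rintro _ ⟨y, hy, rfl⟩
  refine hball ?_
  rw [mem_ball, dist_pathMap]
  calc G.pathRatio γ * dist y z ≤ q ^ n * M :=
        mul_le_mul (hlen ▸ G.pathRatio_le_pow hq γ)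
          (hM (Or.inr (mem_iUnion.2 ⟨_, hy⟩)) (Or.inl (mem_iUnion.2 ⟨_, hz⟩)))
          dist_nonneg (pow_nonneg hq0 n)
    _ < ε := hn

lemma IsOSCWith.image_subset {G : MWGraph d V E} {U : V → Set (Pt d)}
    (hU : G.IsOSCWith U) (e : E) :
    G.S e '' U (G.term e) ⊆ U (G.init e) :=
  (subset_iUnion₂ (s := fun e' (_ : e' ∈ {e' | G.init e' = G.init e}) =>
    G.S e' '' U (G.term e')) e rfl).trans (hU.2.2.2.2.1 (G.init e))

lemma boundaryDensityLE_image {G : MWGraph d V E} {U : V → Set (Pt d)}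
    (hU : G.IsOSCWith U) {B : Set (Pt d)} {s c : ℝ} {e : E} {i : V}
    (hi : G.init e = i) (h : BoundaryDensityLE s (U (G.term e)) B c) :
    BoundaryDensityLE s (U i) (G.S e '' B) (G.r e ^ s * c) :=
  h.image (G.S_sim e) (G.r_pos e) (hi ▸ hU.image_subset e)

variable [DecidableEq V]

lemma Amatrix_nonneg (s : ℝ) (i j : V) : 0 ≤ G.Amatrix s i j := by
  refine Finset.sum_nonneg fun e _ => ?_
  split_ifs
  · exact (Real.rpow_pos_of_pos (G.r_pos e) s).le
  · exact le_rfl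

lemma Amatrix_mulVec (s : ℝ) (x : V → ℝ) (i : V) :
    (G.Amatrix s).mulVec x i =
      ∑ e with G.init e = i, G.r e ^ s * x (G.term e) := by
  simp only [Matrix.mulVec, dotProduct, Amatrix, Matrix.of_apply, Finset.sum_mul]
  rw [Finset.sum_comm, Finset.sum_filter]
  refine Finset.sum_congr rfl fun e _ => ?_
  by_cases he : G.init e = i <;> simp [he]

lemma Amatrix_pow_pos (s : ℝ) {γ : List E} {i : V} (hγ : G.IsPathFrom i γ) :
    0 < (G.Amatrix s ^ γ.length) i (G.pathTerm i γ) := by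
  induction γ generalizing i with
  | nil => simp [pathTerm]
  | cons e γ ih =>
    obtain ⟨rfl, hγ⟩ := hγ
    rw [List.length_cons, pow_succ', Matrix.mul_apply]
    refine Finset.sum_pos' (fun l _ => mul_nonneg (G.Amatrix_nonneg s _ l)
      (pow_apply_nonneg (G.Amatrix_nonneg s) _ l _)) ⟨G.term e, Finset.mem_univ _, mul_pos ?_ (ih hγ)⟩
    refine Finset.sum_pos' (fun e' _ => ?_) ⟨e, Finset.mem_univ _, ?_⟩
    · split_ifs
      · exact (Real.rpow_pos_of_pos (G.r_pos e') s).le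
      · exact le_rfl
    · simpa using Real.rpow_pos_of_pos (G.r_pos e) s

end Paths

section BoundaryDensity

variable {d : ℕ} {V E : Type} [Fintype V] [Fintype E] [DecidableEq V] {G : MWGraph d V E}
  {C K KC U : V → Set (Pt d)} {s : ℝ} {D : V → ℝ}

lemma IsInhomAttractor.subset (hKC : G.IsInhomAttractor C KC) (i : V) :
    KC i ⊆ (⋃ e ∈ ({e | G.init e = i} : Finset E), G.S e '' KC (G.term e)) ∪ C i := by
  rw [hKC.2.2 i]
  simp

lemma boundaryDensityLE_sum (hKC : G.IsInhomAttractor C KC) (hU : G.IsOSCWith U)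
    (hC : ∀ i, BoundaryDensityLE s (U i) (C i) 0)
    (hD : ∀ i, BoundaryDensityLE s (U i) (KC i) (D i)) (i : V) :
    BoundaryDensityLE s (U i) (KC i) (∑ e with G.init e = i, G.r e ^ s * D (G.term e)) := by
  have h := (BoundaryDensityLE.biUnion (W := U i) (T := ({e | G.init e = i} : Finset E))
    fun e he => boundaryDensityLE_image hU (Finset.mem_filter.1 he).2 (hD (G.term e))).union (hC i)
  rw [add_zero] at h
  exact h.mono (hKC.subset i)

lemma exists_subset_pathMap_union (hKC : G.IsInhomAttractor C KC) (hU : G.IsOSCWith U)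
    (hC : ∀ i, BoundaryDensityLE s (U i) (C i) 0)
    (hD : ∀ i, BoundaryDensityLE s (U i) (KC i) (D i))
    (hinv : ∀ i, ∑ e with G.init e = i, G.r e ^ s * D (G.term e) = D i)
    {γ : List E} {i : V} (hγ : G.IsPathFrom i γ) :
    ∃ B, KC i ⊆ G.pathMap γ '' KC (G.pathTerm i γ) ∪ B ∧
      BoundaryDensityLE s (U i) B (D i - G.pathRatio γ ^ s * D (G.pathTerm i γ)) := by
  classical
  induction γ generalizing i with
  | nil =>
    refine ⟨∅, by simp [pathMap, pathTerm], ?_⟩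
    simpa [pathRatio, pathTerm] using
      boundaryDensityLE_of_subset (s := s) isCompact_empty (empty_subset (U i))
  | cons e γ ih =>
    obtain ⟨hi, hγ⟩ := hγ
    obtain ⟨B, hB, hBD⟩ := ih hγ
    let T : Finset E := {e | G.init e = i}
    have heT : e ∈ T := Finset.mem_filter.2 ⟨Finset.mem_univ _, hi⟩
    refine ⟨G.S e '' B ∪ ((⋃ e' ∈ T.erase e, G.S e' '' KC (G.term e')) ∪ C i), ?_, ?_⟩
    · refine (hKC.subset i).trans (union_subset ?_ ?_)
      · refine iUnion₂_subset fun e' he' => ?_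
        rcases eq_or_ne e' e with rfl | hne
        · refine (image_mono hB).trans ?_
          rw [image_union, ← image_comp]
          exact union_subset_union_right _ subset_union_left
        · refine subset_union_of_subset_right (subset_union_of_subset_right
            (subset_union_of_subset_left ?_ _) _) _
          exact subset_biUnion_of_mem (u := fun e' => G.S e' '' KC (G.term e'))
            (show e' ∈ (T.erase e : Set E) from Finset.mem_erase.2 ⟨hne, he'⟩)
      · exact subset_union_of_subset_right (subset_union_of_subset_right
          subset_union_right _) _
    · have hrest := (BoundaryDensityLE.biUnion (W := U i) (T := T.erase e) fun e' he' =>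
        boundaryDensityLE_image hU (Finset.mem_filter.1 (Finset.mem_of_mem_erase he')).2
          (hD (G.term e'))).union (hC i)
      have h := (boundaryDensityLE_image hU hi hBD).union hrest
      have hsum := Finset.add_sum_erase T (fun e => G.r e ^ s * D (G.term e)) heT
      rw [show ∑ e ∈ T, G.r e ^ s * D (G.term e) = D i from hinv i] at hsum
      convert h using 1
      rw [pathRatio_cons, Real.mul_rpow (G.r_pos e).le (G.pathRatio_pos γ).le, ← hsum]
      simp only [pathTerm]
      ring

lemma eq_zero_of_isPathFrom (hD0 : ∀ i, 0 ≤ D i)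
    (hinv : ∀ i, ∑ e with G.init e = i, G.r e ^ s * D (G.term e) = D i)
    {γ : List E} {i : V} (hγ : G.IsPathFrom i γ) (hi : D i = 0) : D (G.pathTerm i γ) = 0 := by
  induction γ generalizing i with
  | nil => exact hi
  | cons e γ ih =>
    refine ih hγ.2 ?_
    have hr := fun e => Real.rpow_pos_of_pos (G.r_pos e) s
    have hz := (Finset.sum_eq_zero_iff_of_nonneg fun e _ =>
      mul_nonneg (hr e).le (hD0 (G.term e))).1 ((hinv i).trans hi) e (by simpa using hγ.1)
    exact (mul_eq_zero.1 hz).resolve_left (hr e).ne'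

/-- Under the strong open set condition, up to compact parts of the open sets `U i`, the
inhomogeneous self-similar sets have zero upper density. -/
lemma boundaryDensityLE_zero (hSC : G.StronglyConnected) (hK : G.IsAttractor K)
    (hKC : G.IsInhomAttractor C KC) (hU : G.IsOSCWith U) (hUK : ∀ i, (U i ∩ K i).Nonempty)
    (hs : IsS0 G s) (hC : ∀ i, BoundaryDensityLE s (U i) (C i) 0) {h : V → ℝ}
    (hh : ∀ i, BoundaryDensityLE s (U i) (KC i) (h i)) (i : V) :
    BoundaryDensityLE s (U i) (KC i) 0 := by
  choose D hD hDle using fun i => (hh i).exists_isLeast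
  have hD0 : ∀ i, 0 ≤ D i := fun i => BoundaryDensityLE.nonneg (hD i)
  have hsub : D ≤ (G.Amatrix s).mulVec D := fun j => by
    rw [G.Amatrix_mulVec]
    exact hDle j (boundaryDensityLE_sum hKC hU hC hD j)
  have hirr : ∀ i j, ∃ k : ℕ, 0 < (G.Amatrix s ^ k) i j := fun i j => by
    obtain ⟨γ, -, hγ, rfl⟩ := hSC i j
    exact ⟨γ.length, G.Amatrix_pow_pos s hγ⟩
  have heq := mulVec_eq_of_le_mulVec (G.Amatrix_nonneg s) hirr hs.2 hD0 hsub
  have hinv : ∀ i, ∑ e with G.init e = i, G.r e ^ s * D (G.term e) = D i := fun j => by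
    rw [← G.Amatrix_mulVec, heq]
  obtain ⟨γ, hγ, hγU⟩ := hK.exists_path_image_subset hKC.1 (hU.2.1 i) (hUK i)
  obtain ⟨B, hB, hBD⟩ := exists_subset_pathMap_union hKC hU hC hD hinv hγ
  have hle := hDle i (((boundaryDensityLE_of_subset
    ((hKC.1 _).image (G.continuous_pathMap γ)) hγU).union hBD).mono hB)
  have hzero : D (G.pathTerm i γ) = 0 := by
    have hr := Real.rpow_pos_of_pos (G.pathRatio_pos γ) s
    have := mul_nonneg hr.le (hD0 (G.pathTerm i γ))
    exact (mul_eq_zero.1 (show G.pathRatio γ ^ s * D (G.pathTerm i γ) = 0 by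
      linarith)).resolve_left hr.ne'
  obtain ⟨η, -, hη, hηi⟩ := hSC (G.pathTerm i γ) i
  have hDi := eq_zero_of_isPathFrom hD0 hinv hη hzero
  rw [hηi] at hDi
  exact hDi ▸ hD i

end BoundaryDensity

end MWGraph

theorem stmt1 {d : ℕ} {V E : Type} [Fintype V] [Fintype E] [DecidableEq V]
    (G : MWGraph d V E) (hSC : G.StronglyConnected)
    (C K KC U : V → Set (Pt d))
    (hC : G.IsCondensation C) (hK : G.IsAttractor K) (hKC : G.IsInhomAttractor C KC)
    (hU : G.IsOSCWith U) (hUK : ∀ i, (U i ∩ K i).Nonempty)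
    (hCU : ∀ i, C i ⊆ closure (U i))
    (s0 : ℝ) (hs0 : IsS0 G s0)
    (hint : ∀ i : V, ∫⁻ t in Set.Ioi (0 : ℝ),
      ENNReal.ofReal (Real.exp (-s0 * t) * (coveringNumber (C i) (Real.exp (-t)) : ℝ)) < ⊤)
    (hX : Pairwise fun i j : V => Disjoint (interior (G.X i)) (interior (G.X j)))
    (hGM : G.GM = Set.univ)
    (h : V → ℝ) (hpos : ∀ i, 0 < h i)
    (hlim : ∀ i : V, Tendsto (fun t : ℝ => (coveringNumber (KC i) (Real.exp (-t)) : ℝ) /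
      (h i * Real.exp (s0 * t))) atTop (𝓝 1)) :
    Tendsto (fun t : ℝ => Real.exp (-s0 * t) *
      (coveringNumber (⋃ i : V, KC i) (Real.exp (-t)) : ℝ)) atTop (𝓝 (∑ i : V, h i)) := by
  have hbdd : ∀ i, Bornology.IsBounded (KC i) := fun i => (hKC.1 i).isBounded
  have hlim' : ∀ i, Tendsto (fun t : ℝ => Real.exp (-s0 * t) *
      (coveringNumber (KC i) (Real.exp (-t)) : ℝ)) atTop (𝓝 (h i)) := by
    intro i
    have := (hlim i).const_mul (h i)
    rw [mul_one] at this
    refine this.congr fun t => ?_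
    rw [neg_mul, Real.exp_neg (s0 * t)]
    generalize (coveringNumber (KC i) (Real.exp (-t)) : ℝ) = N
    have := (hpos i).ne'
    field_simp
  have hC0 : ∀ i, BoundaryDensityLE s0 (U i) (C i) 0 := fun i =>
    boundaryDensityLE_of_upperDensityLE fun c hc => ⟨(hC i).1.isBounded,
      eventually_coveringNumber_le_of_lintegral_lt_top (hC i).1.isBounded hs0.1 (hint i) hc⟩
  have hh : ∀ i, BoundaryDensityLE s0 (U i) (KC i) (h i) := fun i =>
    boundaryDensityLE_of_upperDensityLE fun c hc =>
      ⟨hbdd i, ((hlim' i).eventually_lt_const hc).mono fun _ ht => ht.le⟩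
  have hzero := G.boundaryDensityLE_zero hSC hK hKC hU hUK hs0 hC0 hh
  have hsum := tendsto_finsetSum Finset.univ fun i _ => hlim' i
  refine tendsto_order.2 ⟨fun a ha => ?_, fun a ha => ?_⟩
  · obtain ⟨ε, hε, hεa⟩ : ∃ ε > 0, a < ∑ i, h i - Fintype.card V * ε := by
      have hcard : (0 : ℝ) < Fintype.card V + 1 := by positivity
      refine ⟨(∑ i, h i - a) / (Fintype.card V + 1), div_pos (sub_pos.2 ha) hcard, ?_⟩
      have hdiv := div_mul_cancel₀ (∑ i, h i - a) hcard.ne'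
      have hdpos := div_pos (sub_pos.2 ha) hcard
      linarith
    choose F R hF hFU hcov hR using fun i => hzero i ε hε
    have hFc : ∀ i, IsCompact (F i ∩ KC i) := fun i => (hF i).inter_right (hKC.1 i).isClosed
    have hUint : ∀ i, F i ∩ KC i ⊆ interior (G.X i) := fun i =>
      inter_subset_left.trans ((hFU i).trans (interior_maximal (hU.2.2.2.1 i) (hU.2.1 i)))
    have hadd := eventually_sum_coveringNumber_le hFc fun i j hij =>
      (hX hij).mono (hUint i) (hUint j)
    have hexp : Tendsto (fun t : ℝ => Real.exp (-t)) atTop (𝓝[>] 0) :=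
      Real.tendsto_exp_atBot_nhdsGT.comp tendsto_neg_atTop_atBot
    filter_upwards [hexp.eventually hadd, eventually_all.2 fun i => (hR i).2,
      (hsum.sub_const (Fintype.card V * ε)).eventually_const_lt hεa] with t htadd htR ht
    refine ht.trans_le ?_
    have hr := Real.exp_pos (-t)
    have hE := (Real.exp_pos (-s0 * t)).le
    have hsplit : ∀ i, (coveringNumber (KC i) (Real.exp (-t)) : ℝ) ≤
        coveringNumber (F i ∩ KC i) (Real.exp (-t)) + coveringNumber (R i) (Real.exp (-t)) := by
      intro i
      have hsub : KC i ⊆ (F i ∩ KC i) ∪ R i := fun x hx =>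
        (hcov i hx).imp (fun hxF => ⟨hxF, hx⟩) id
      exact_mod_cast (coveringNumber_mono ((hFc i).isBounded.union (hR i).1) hr hsub).trans
        (coveringNumber_union_le (hFc i).isBounded (hR i).1 hr)
    have hN : ∑ i, (coveringNumber (F i ∩ KC i) (Real.exp (-t)) : ℝ) ≤
        coveringNumber (⋃ i, KC i) (Real.exp (-t)) := by
      exact_mod_cast htadd.trans (coveringNumber_mono (isCompact_iUnion hKC.1).isBounded hr
        (iUnion_mono fun i => inter_subset_right))
    have hbound : ∑ i, Real.exp (-s0 * t) * (coveringNumber (KC i) (Real.exp (-t)) : ℝ) ≤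
        Real.exp (-s0 * t) * ∑ i, (coveringNumber (F i ∩ KC i) (Real.exp (-t)) : ℝ) +
          Fintype.card V * ε := by
      have hconst : ∑ _i : V, ε = Fintype.card V * ε := by simp
      rw [Finset.mul_sum, ← hconst, ← Finset.sum_add_distrib]
      refine Finset.sum_le_sum fun i _ => ?_
      have := mul_le_mul_of_nonneg_left (hsplit i) hE
      rw [mul_add] at this
      exact this.trans (add_le_add_right (htR i) _)
    have := mul_le_mul_of_nonneg_left hN hE
    linarith
  · filter_upwards [hsum.eventually_lt_const ha] with t ht
    refine lt_of_le_of_lt ?_ ht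
    rw [← Finset.mul_sum]
    refine mul_le_mul_of_nonneg_left ?_ (Real.exp_pos _).le
    exact_mod_cast coveringNumber_iUnion_le hbdd (Real.exp_pos (-t))
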